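/- Harary's Balance Theorem (bipartition form): A signed graph Σ is balanced if and only if there is a bipartition of its vertex set V = X ∪ Y (one of X, Y possibly empty) such that every positive edge has both endpoints in X or both in Y, while every negative edge has one endpoint in X and one in Y. -/

import Mathlib

/-- The sign of a walk in a signed graph: the product of the signs of its edges. -/
def walkSign {V : Type*} (G : SimpleGraph V) (σ : Sym2 V → ℤˣ) {u v : V}
    (w : G.Walk u v) : ℤˣ :=
  (w.edges.map σ).prod

/-- A signed graph is balanced if every circle (cycle) is positive. -/
def sgBalanced {V : Type*} (G : SimpleGraph V) (σ : Sym2 V → ℤˣ) : Prop :=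
  ∀ ⦃v : V⦄ (w : G.Walk v v), w.IsCycle → walkSign G σ w = 1

/-!
In a balanced signed graph, loop erasure preserves the sign of a walk: each erased loop is an edge
followed by a path, hence either a circle or an edge traversed back and forth. So every closed walk
is positive, and the sign of a walk depends only on its endpoints. Signing each vertex by the walks
from a fixed root of its component makes the sign of every edge the product of the signs of its
ends; the vertices of sign `1` are one side of the bipartition.
-/

section WalkSign

variable {V : Type*} {G : SimpleGraph V} (σ : Sym2 V → ℤˣ) {u v w : V}

@[simp]
theorem walkSign_nil : walkSign G σ (.nil : G.Walk u u) = 1 := rfl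

@[simp]
theorem walkSign_cons (h : G.Adj u v) (p : G.Walk v w) :
    walkSign G σ (.cons h p) = σ s(u, v) * walkSign G σ p := by
  simp [walkSign]

theorem walkSign_append (p : G.Walk u v) (q : G.Walk v w) :
    walkSign G σ (p.append q) = walkSign G σ p * walkSign G σ q := by
  simp [walkSign]

theorem walkSign_reverse (p : G.Walk u v) : walkSign G σ p.reverse = walkSign G σ p := by
  simp [walkSign, List.prod_reverse]

theorem walkSign_copy {u' v' : V} (p : G.Walk u v) (hu : u = u') (hv : v = v') :
    walkSign G σ (p.copy hu hv) = walkSign G σ p := by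
  simp [walkSign]

end WalkSign

namespace sgBalanced

variable {V : Type*} {G : SimpleGraph V} {σ : Sym2 V → ℤˣ} {u v : V}

theorem walkSign_cons_of_isPath (hb : sgBalanced G σ) (h : G.Adj u v) {p : G.Walk v u}
    (hp : p.IsPath) : walkSign G σ (.cons h p) = 1 := by
  by_cases he : s(u, v) ∈ p.edges
  · rw [hp.eq_adj_toWalk_of_mem_edges (Sym2.eq_swap ▸ he)]
    simp [Sym2.eq_swap (a := v), Int.units_mul_self]
  · exact hb _ ((p.cons_isCycle_iff h).2 ⟨hp, he⟩)

theorem walkSign_bypass [DecidableEq V] (hb : sgBalanced G σ) (p : G.Walk u v) :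
    walkSign G σ p.bypass = walkSign G σ p := by
  induction p with
  | nil => rfl
  | @cons u v w h p ih =>
    rw [walkSign_cons, ← ih, SimpleGraph.Walk.bypass]
    split_ifs with hu
    · let loop := SimpleGraph.Walk.cons h (p.bypass.takeUntil u hu)
      have loop_pos : walkSign G σ loop = 1 :=
        hb.walkSign_cons_of_isPath h (p.bypass_isPath.takeUntil hu)
      calc walkSign G σ (p.bypass.dropUntil u hu)
          = walkSign G σ (loop.append (p.bypass.dropUntil u hu)) := by
            rw [walkSign_append, loop_pos, one_mul]
        _ = σ s(u, v) * walkSign G σ p.bypass := by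
            rw [SimpleGraph.Walk.cons_append, p.bypass.take_spec hu, walkSign_cons]
    · exact walkSign_cons σ h p.bypass

theorem walkSign_eq_one (hb : sgBalanced G σ) (p : G.Walk u u) : walkSign G σ p = 1 := by
  classical
  have bypass_nil : p.bypass.Nil := SimpleGraph.Walk.isPath_iff_nil.1 p.bypass_isPath
  rw [← hb.walkSign_bypass p, bypass_nil.eq_nil, walkSign_nil]

theorem walkSign_eq_walkSign (hb : sgBalanced G σ) (p q : G.Walk u v) :
    walkSign G σ p = walkSign G σ q := by
  have closed := hb.walkSign_eq_one (p.append q.reverse)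
  rwa [walkSign_append, walkSign_reverse, mul_eq_one_iff_eq_inv, Int.units_inv_eq_self] at closed

end sgBalanced

/-- A vertex signing `θ` for which every edge sign is the product of the signs of its two
ends, i.e. a switching function that turns the signed graph `(G, σ)` into the all-positive one. -/
def IsSignPotential {V : Type*} (G : SimpleGraph V) (σ : Sym2 V → ℤˣ) (θ : V → ℤˣ) : Prop :=
  ∀ ⦃u v : V⦄, G.Adj u v → σ s(u, v) = θ u * θ v

section SignPotential

variable {V : Type*} {G : SimpleGraph V} {σ : Sym2 V → ℤˣ} {θ : V → ℤˣ}

theorem IsSignPotential.walkSign_eq_mul (hθ : IsSignPotential G σ θ) {u v : V}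
    (p : G.Walk u v) : walkSign G σ p = θ u * θ v := by
  induction p with
  | nil => rw [walkSign_nil, Int.units_mul_self]
  | @cons u v w h p ih =>
    rw [walkSign_cons, hθ h, ih, mul_assoc, ← mul_assoc (θ v), Int.units_mul_self, one_mul]

theorem IsSignPotential.sgBalanced (hθ : IsSignPotential G σ θ) : sgBalanced G σ :=
  fun v w _ => (hθ.walkSign_eq_mul w).trans (Int.units_mul_self (θ v))

theorem sgBalanced.exists_isSignPotential (hb : sgBalanced G σ) :
    ∃ θ : V → ℤˣ, IsSignPotential G σ θ := by
  let root (v : V) : V := (G.connectedComponentMk v).out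
  have root_reachable (v : V) : G.Reachable (root v) v :=
    SimpleGraph.ConnectedComponent.exact (G.connectedComponentMk v).out_eq
  let walk (v : V) : G.Walk (root v) v := (root_reachable v).some
  refine ⟨fun v => walkSign G σ (walk v), fun u v h => ?_⟩
  have same_root : root u = root v :=
    congrArg Quot.out (SimpleGraph.ConnectedComponent.sound h.reachable)
  have walk_v : walkSign G σ (walk v) = walkSign G σ (walk u) * σ s(u, v) := by
    rw [hb.walkSign_eq_walkSign (walk v) (((walk u).append h.toWalk).copy same_root rfl),
      walkSign_copy, walkSign_append, walkSign_cons, walkSign_nil, mul_one]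
  calc σ s(u, v)
      = walkSign G σ (walk u) * (walkSign G σ (walk u) * σ s(u, v)) := by
        rw [← mul_assoc, Int.units_mul_self, one_mul]
    _ = walkSign G σ (walk u) * walkSign G σ (walk v) := by rw [walk_v]

theorem sgBalanced_iff_exists_isSignPotential :
    sgBalanced G σ ↔ ∃ θ : V → ℤˣ, IsSignPotential G σ θ :=
  ⟨sgBalanced.exists_isSignPotential, fun ⟨_, hθ⟩ => hθ.sgBalanced⟩

theorem intUnits_eq_mul_iff (a b c : ℤˣ) : a = b * c ↔ (a = 1 ↔ (b = 1 ↔ c = 1)) := by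
  decide +revert

theorem isSignPotential_iff :
    IsSignPotential G σ θ ↔ ∀ u v : V, G.Adj u v → (σ s(u, v) = 1 ↔ (θ u = 1 ↔ θ v = 1)) := by
  simp only [IsSignPotential, intUnits_eq_mul_iff]

theorem exists_isSignPotential_iff_exists_bipartition :
    (∃ θ : V → ℤˣ, IsSignPotential G σ θ) ↔
      ∃ X : Set V, ∀ u v : V, G.Adj u v → (σ s(u, v) = 1 ↔ (u ∈ X ↔ v ∈ X)) := by
  classical
  constructor
  · rintro ⟨θ, hθ⟩
    exact ⟨{v | θ v = 1}, isSignPotential_iff.1 hθ⟩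
  · rintro ⟨X, hX⟩
    have sign_eq_one (v : V) : (if v ∈ X then (1 : ℤˣ) else -1) = 1 ↔ v ∈ X := by
      split_ifs with hv <;> simp [hv]
    refine ⟨fun v => if v ∈ X then 1 else -1, isSignPotential_iff.2 ?_⟩
    simpa only [sign_eq_one] using hX

end SignPotential

theorem harary_balance_bipartition_general {V : Type*} (G : SimpleGraph V) (σ : Sym2 V → ℤˣ) :
    sgBalanced G σ ↔
      ∃ X : Set V, ∀ u v : V, G.Adj u v → (σ s(u, v) = 1 ↔ (u ∈ X ↔ v ∈ X)) :=
  sgBalanced_iff_exists_isSignPotential.trans exists_isSignPotential_iff_exists_bipartition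

/-- Harary's Balance Theorem (bipartition form): a signed graph is balanced iff
there is a bipartition `{X, Xᶜ}` of the vertex set (one side possibly empty) such that
an edge is positive exactly when both of its endpoints lie on the same side. -/
theorem harary_balance_bipartition {V : Type*} [Fintype V]
    (G : SimpleGraph V) (σ : Sym2 V → ℤˣ) :
    sgBalanced G σ ↔
      ∃ X : Set V, ∀ u v : V, G.Adj u v → (σ s(u, v) = 1 ↔ (u ∈ X ↔ v ∈ X)) :=
  harary_balance_bipartition_general G σ
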